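/- For every integer r ≥ 55, one has r − π(r) > (p_{r+1} / log p_{r+1}) · log 2, where p_n denotes the n-th prime, π is the prime-counting function, and log denotes the natural logarithm. -/

import Mathlib

/-- A weak upper Stirling estimate. -/
theorem log_factorial_le (n : ℕ) (hn : 1 ≤ n) :
    Real.log (n.factorial : ℝ) ≤ n * Real.log n - n + Real.log n + 1 := by
  induction n, hn using Nat.le_induction with
  | base => simp
  | succ n hn ih =>
    have hn0 : (0 : ℝ) < n := by exact_mod_cast hn
    have hstep := Real.one_sub_inv_le_log_of_pos (x := ((n : ℝ) + 1) / n) (by positivity)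
    rw [Real.log_div (by positivity) (by positivity)] at hstep
    have hmul : 1 ≤ ((n : ℝ) + 1) * (Real.log (n + 1) - Real.log n) := by
      have h := mul_le_mul_of_nonneg_left hstep (show (0 : ℝ) ≤ n + 1 by positivity)
      have he : ((n : ℝ) + 1) * (1 - (((n : ℝ) + 1) / n)⁻¹) = 1 := by
        field_simp
        ring
      linarith
    rw [Nat.factorial_succ, Nat.cast_mul, Real.log_mul (by positivity) (by positivity)]
    push_cast
    nlinarith

/-- A weak lower Stirling estimate. -/
theorem le_log_factorial (n : ℕ) (hn : 1 ≤ n) :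
    n * Real.log n - n ≤ Real.log (n.factorial : ℝ) := by
  have h := Stirling.le_log_factorial_stirling (n := n) (by omega)
  have h1 : 0 ≤ Real.log n := Real.log_natCast_nonneg n
  have h2 : 0 ≤ Real.log (2 * Real.pi) := Real.log_nonneg (by linarith [Real.pi_gt_three])
  linarith

/-- The logarithm of a factorial in terms of the von Mangoldt function; the summation range may be
any range reaching past `n`. -/
theorem log_factorial_eq_sum_vonMangoldt {n N : ℕ} (h : n ≤ N) :
    Real.log (n.factorial : ℝ) =
      ∑ d ∈ Finset.Ioc 0 N, ArithmeticFunction.vonMangoldt d * ((n / d : ℕ) : ℝ) := by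
  have h1 : Real.log (n.factorial : ℝ) = ∑ k ∈ Finset.Ioc 0 n, Real.log k := by
    clear h
    induction n with
    | zero => simp
    | succ n ih =>
      rw [Nat.factorial_succ, Nat.cast_mul, Real.log_mul (by positivity) (by positivity), ih,
        ← Finset.insert_Ioc_right_eq_Ioc_add_one (Nat.zero_le n), Finset.sum_insert (by simp)]
  have h2 := ArithmeticFunction.sum_Ioc_mul_zeta_eq_sum ArithmeticFunction.vonMangoldt n
  rw [ArithmeticFunction.vonMangoldt_mul_zeta] at h2
  simp only [ArithmeticFunction.log_apply] at h2
  rw [h1, h2]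
  refine Finset.sum_subset (Finset.Ioc_subset_Ioc_right h) fun d hd hd' => ?_
  have : n < d := by simp only [Finset.mem_Ioc] at hd hd'; omega
  simp [Nat.div_eq_of_lt this]

/-- Chebyshev's lower bound for `ψ` via `(30m)! m! / ((15m)! (10m)! (6m)!)`. -/
theorem log_factorial_chebyshev_le_psi (m : ℕ) :
    Real.log ((30 * m).factorial : ℝ) + Real.log (m.factorial : ℝ)
      - Real.log ((15 * m).factorial : ℝ) - Real.log ((10 * m).factorial : ℝ)
      - Real.log ((6 * m).factorial : ℝ) ≤ Chebyshev.psi ((30 * m : ℕ) : ℝ) := by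
  rw [log_factorial_eq_sum_vonMangoldt (le_refl (30 * m)),
    log_factorial_eq_sum_vonMangoldt (show m ≤ 30 * m by omega),
    log_factorial_eq_sum_vonMangoldt (show 15 * m ≤ 30 * m by omega),
    log_factorial_eq_sum_vonMangoldt (show 10 * m ≤ 30 * m by omega),
    log_factorial_eq_sum_vonMangoldt (show 6 * m ≤ 30 * m by omega),
    ← Finset.sum_add_distrib, ← Finset.sum_sub_distrib, ← Finset.sum_sub_distrib,
    ← Finset.sum_sub_distrib, Chebyshev.psi, Nat.floor_natCast]
  refine Finset.sum_le_sum fun d _ => ?_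
  have hdiv : 30 * m / d + m / d ≤ 15 * m / d + 10 * m / d + 6 * m / d + 1 := by
    have e1 : m / d = 30 * m / d / 30 := by
      rw [Nat.div_div_eq_div_mul, mul_comm d, ← Nat.div_div_eq_div_mul]; congr 1; omega
    have e2 : 15 * m / d = 30 * m / d / 2 := by
      rw [Nat.div_div_eq_div_mul, mul_comm d, ← Nat.div_div_eq_div_mul]; congr 1; omega
    have e3 : 10 * m / d = 30 * m / d / 3 := by
      rw [Nat.div_div_eq_div_mul, mul_comm d, ← Nat.div_div_eq_div_mul]; congr 1; omega
    have e4 : 6 * m / d = 30 * m / d / 5 := by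
      rw [Nat.div_div_eq_div_mul, mul_comm d, ← Nat.div_div_eq_div_mul]; congr 1; omega
    omega
  have hdiv' : ((30 * m / d : ℕ) : ℝ) + ((m / d : ℕ) : ℝ) ≤
      ((15 * m / d : ℕ) : ℝ) + ((10 * m / d : ℕ) : ℝ) + ((6 * m / d : ℕ) : ℝ) + 1 := by
    exact_mod_cast hdiv
  nlinarith [ArithmeticFunction.vonMangoldt_nonneg (n := d)]

theorem psi_thirty_mul_ge (m : ℕ) (hm : 1 ≤ m) :
    27.638 * (m : ℝ) - 3 * Real.log ((30 * m : ℕ) : ℝ) - 3 ≤ Chebyshev.psi ((30 * m : ℕ) : ℝ) := by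
  have hm0 : (0 : ℝ) < m := by exact_mod_cast hm
  have h := log_factorial_chebyshev_le_psi m
  have h30 := le_log_factorial (30 * m) (by omega)
  have h1 := le_log_factorial m hm
  have h15 := log_factorial_le (15 * m) (by omega)
  have h10 := log_factorial_le (10 * m) (by omega)
  have h6 := log_factorial_le (6 * m) (by omega)
  have l6 : Real.log 6 = Real.log 2 + Real.log 3 := by
    rw [← Real.log_mul (by norm_num) (by norm_num)]; norm_num
  have l10 : Real.log 10 = Real.log 2 + Real.log 5 := by
    rw [← Real.log_mul (by norm_num) (by norm_num)]; norm_num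
  have l15 : Real.log 15 = Real.log 3 + Real.log 5 := by
    rw [← Real.log_mul (by norm_num) (by norm_num)]; norm_num
  have l30 : Real.log 30 = Real.log 2 + Real.log 3 + Real.log 5 := by
    rw [← l6, ← Real.log_mul (by norm_num) (by norm_num)]; norm_num
  push_cast at h h30 h15 h10 h6 ⊢
  rw [Real.log_mul (by norm_num) hm0.ne'] at h30 h15 h10 h6 ⊢
  rw [l30] at h30 ⊢
  rw [l15] at h15
  rw [l10] at h10
  rw [l6] at h6
  have b2 := Real.log_two_gt_d9
  have b3 := Real.log_three_gt_d9
  have b5 := Real.log_five_gt_d9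
  have key : 27.638 * (m : ℝ) ≤
      (14 * Real.log 2 + 9 * Real.log 3 + 5 * Real.log 5) * m :=
    mul_le_mul_of_nonneg_right (by linarith) hm0.le
  linarith

theorem prime_iff_coprime_factorial {n : ℕ} (h₁ : 95 ≤ n) (h₂ : n < 9025) :
    n.Prime ↔ Nat.gcd n (Nat.factorial 94) = 1 := by
  refine ⟨fun h => h.coprime_factorial_of_lt (by omega), fun h => ?_⟩
  by_contra hp
  have hlt := (Nat.coprime_factorial_iff (by omega)).1 h
  have hsq := Nat.minFac_sq_le_self (by omega) hp
  nlinarith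

theorem count_prime_add_ninetyFive {n : ℕ} (hn : n ≤ 8930) :
    Nat.count Nat.Prime (95 + n) =
      24 + Nat.count (fun k => Nat.gcd (95 + k) (Nat.factorial 94) = 1) n := by
  rw [Nat.count_add, show Nat.count Nat.Prime 95 = 24 by decide +kernel]
  congr 1
  rw [Nat.count_eq_card_filter_range, Nat.count_eq_card_filter_range]
  congr 1
  refine Finset.filter_congr fun k hk => prime_iff_coprime_factorial (by omega) ?_
  have := Finset.mem_range.1 hk
  omega

theorem mul_log_two_lt_of_pow_lt {a b q c r : ℕ} (ha : Nat.count Nat.Prime (a + 1) ≤ c)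
    (hb : b ≤ Nat.count Nat.Prime (q + 1)) (hq : 3 ≤ q) (hca : c ≤ a)
    (hpow : 2 ^ q < q ^ (a - c)) (har : a ≤ r) (hrb : r < b) :
    (r : ℝ) - (Nat.primeCounting r : ℝ) >
      ((Nat.nth Nat.Prime r : ℝ) / Real.log (Nat.nth Nat.Prime r)) * Real.log 2 := by
  have hpq : Nat.nth Nat.Prime r ≤ q :=
    Nat.lt_succ_iff.1 (Nat.nth_lt_of_lt_count (hrb.trans_le hb))
  have hp3 : 3 ≤ Nat.nth Nat.Prime r := by
    have hr : 1 ≤ r := by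
      by_contra hr
      have h0 : a = 0 := by omega
      subst h0
      have : q ^ (0 - c) = 1 := by simp
      have := Nat.one_le_two_pow (n := q)
      omega
    calc 3 = Nat.nth Nat.Prime 1 := Nat.nth_prime_one_eq_three.symm
      _ ≤ _ := Nat.nth_monotone Nat.infinite_setOfPred_prime hr
  have hπ : Nat.primeCounting r + a ≤ c + r := by
    have h := Nat.count_add Nat.Prime (a + 1) (r - a)
    have h' := Nat.count_le (p := fun k => Nat.Prime (a + 1 + k)) (n := r - a)
    rw [show a + 1 + (r - a) = r + 1 by omega] at h
    change Nat.count Nat.Prime (r + 1) + a ≤ c + r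
    omega
  have hπ' : (Nat.primeCounting r : ℝ) + a ≤ c + r := by exact_mod_cast hπ
  set p := Nat.nth Nat.Prime r
  have he : Real.exp 1 ≤ 3 := by linarith [Real.exp_one_lt_d9]
  have hp3' : (3 : ℝ) ≤ p := by exact_mod_cast hp3
  have hq3' : (3 : ℝ) ≤ q := by exact_mod_cast hq
  have hpq' : (p : ℝ) ≤ q := by exact_mod_cast hpq
  have hlp : 0 < Real.log p := Real.log_pos (by linarith)
  have hlq : 0 < Real.log q := Real.log_pos (by linarith)
  have hanti := Real.log_div_self_antitoneOn (Set.mem_Ici.2 (he.trans hp3'))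
    (Set.mem_Ici.2 (he.trans hq3')) hpq'
  have hmono : (p : ℝ) / Real.log p ≤ q / Real.log q := by
    rw [div_le_div_iff₀ (by linarith) (by linarith)] at hanti
    rw [div_le_div_iff₀ hlp hlq]
    linarith
  have hlog : (q : ℝ) * Real.log 2 < ((a : ℝ) - c) * Real.log q := by
    have h : (2 : ℝ) ^ q < (q : ℝ) ^ (a - c) := by exact_mod_cast hpow
    have h' := Real.log_lt_log (by positivity) h
    rwa [Real.log_pow, Real.log_pow, Nat.cast_sub hca] at h'
  calc (p : ℝ) / Real.log p * Real.log 2 ≤ q / Real.log q * Real.log 2 :=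
        mul_le_mul_of_nonneg_right hmono (Real.log_nonneg (by norm_num))
    _ < (a : ℝ) - c := by rwa [div_mul_eq_mul_div, div_lt_iff₀ hlq]
    _ ≤ (r : ℝ) - Nat.primeCounting r := by linarith

theorem mul_log_two_lt_of_lt (r : ℕ) (hr : 55 ≤ r) (hr' : r < 1093) :
    (r : ℝ) - (Nat.primeCounting r : ℝ) >
      ((Nat.nth Nat.Prime r : ℝ) / Real.log (Nat.nth Nat.Prime r)) * Real.log 2 := by
  rcases lt_or_ge r 66 with h66 | h66
  · exact mul_log_two_lt_of_pow_lt (a := 55) (b := 66) (q := 317) (c := 16)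
      (by decide +kernel)
      (le_of_le_of_eq (by decide +kernel) (count_prime_add_ninetyFive (n := 223) (by norm_num)).symm)
      (by norm_num) (by norm_num) (by decide +kernel) (by assumption) (by assumption)
  rcases lt_or_ge r 80 with h80 | h80
  · exact mul_log_two_lt_of_pow_lt (a := 66) (b := 80) (q := 409) (c := 18)
      (by decide +kernel)
      (le_of_le_of_eq (by decide +kernel) (count_prime_add_ninetyFive (n := 315) (by norm_num)).symm)
      (by norm_num) (by norm_num) (by decide +kernel) (by assumption) (by assumption)
  rcases lt_or_ge r 99 with h99 | h99
  · exact mul_log_two_lt_of_pow_lt (a := 80) (b := 99) (q := 523) (c := 22)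
      (by decide +kernel)
      (le_of_le_of_eq (by decide +kernel) (count_prime_add_ninetyFive (n := 429) (by norm_num)).symm)
      (by norm_num) (by norm_num) (by decide +kernel) (by assumption) (by assumption)
  rcases lt_or_ge r 125 with h125 | h125
  · exact mul_log_two_lt_of_pow_lt (a := 99) (b := 125) (q := 691) (c := 25)
      ((count_prime_add_ninetyFive (n := 5) (by norm_num)).trans_le (by decide +kernel))
      (le_of_le_of_eq (by decide +kernel) (count_prime_add_ninetyFive (n := 597) (by norm_num)).symm)
      (by norm_num) (by norm_num) (by decide +kernel) (by assumption) (by assumption)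
  rcases lt_or_ge r 159 with h159 | h159
  · exact mul_log_two_lt_of_pow_lt (a := 125) (b := 159) (q := 937) (c := 30)
      ((count_prime_add_ninetyFive (n := 31) (by norm_num)).trans_le (by decide +kernel))
      (le_of_le_of_eq (by decide +kernel) (count_prime_add_ninetyFive (n := 843) (by norm_num)).symm)
      (by norm_num) (by norm_num) (by decide +kernel) (by assumption) (by assumption)
  rcases lt_or_ge r 204 with h204 | h204
  · exact mul_log_two_lt_of_pow_lt (a := 159) (b := 204) (q := 1249) (c := 37)
      ((count_prime_add_ninetyFive (n := 65) (by norm_num)).trans_le (by decide +kernel))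
      (le_of_le_of_eq (by decide +kernel) (count_prime_add_ninetyFive (n := 1155) (by norm_num)).symm)
      (by norm_num) (by norm_num) (by decide +kernel) (by assumption) (by assumption)
  rcases lt_or_ge r 264 with h264 | h264
  · exact mul_log_two_lt_of_pow_lt (a := 204) (b := 264) (q := 1693) (c := 46)
      ((count_prime_add_ninetyFive (n := 110) (by norm_num)).trans_le (by decide +kernel))
      (le_of_le_of_eq (by decide +kernel) (count_prime_add_ninetyFive (n := 1599) (by norm_num)).symm)
      (by norm_num) (by norm_num) (by decide +kernel) (by assumption) (by assumption)
  rcases lt_or_ge r 344 with h344 | h344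
  · exact mul_log_two_lt_of_pow_lt (a := 264) (b := 344) (q := 2311) (c := 56)
      ((count_prime_add_ninetyFive (n := 170) (by norm_num)).trans_le (by decide +kernel))
      (le_of_le_of_eq (by decide +kernel) (count_prime_add_ninetyFive (n := 2217) (by norm_num)).symm)
      (by norm_num) (by norm_num) (by decide +kernel) (by assumption) (by assumption)
  rcases lt_or_ge r 454 with h454 | h454
  · exact mul_log_two_lt_of_pow_lt (a := 344) (b := 454) (q := 3209) (c := 68)
      ((count_prime_add_ninetyFive (n := 250) (by norm_num)).trans_le (by decide +kernel))
      (le_of_le_of_eq (by decide +kernel) (count_prime_add_ninetyFive (n := 3115) (by norm_num)).symm)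
      (by norm_num) (by norm_num) (by decide +kernel) (by assumption) (by assumption)
  rcases lt_or_ge r 604 with h604 | h604
  · exact mul_log_two_lt_of_pow_lt (a := 454) (b := 604) (q := 4447) (c := 87)
      ((count_prime_add_ninetyFive (n := 360) (by norm_num)).trans_le (by decide +kernel))
      (le_of_le_of_eq (by decide +kernel) (count_prime_add_ninetyFive (n := 4353) (by norm_num)).symm)
      (by norm_num) (by norm_num) (by decide +kernel) (by assumption) (by assumption)
  rcases lt_or_ge r 810 with h810 | h810
  · exact mul_log_two_lt_of_pow_lt (a := 604) (b := 810) (q := 6221) (c := 110)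
      ((count_prime_add_ninetyFive (n := 510) (by norm_num)).trans_le (by decide +kernel))
      (le_of_le_of_eq (by decide +kernel) (count_prime_add_ninetyFive (n := 6127) (by norm_num)).symm)
      (by norm_num) (by norm_num) (by decide +kernel) (by assumption) (by assumption)
  · exact mul_log_two_lt_of_pow_lt (a := 810) (b := 1093) (q := 8761) (c := 140)
      ((count_prime_add_ninetyFive (n := 716) (by norm_num)).trans_le (by decide +kernel))
      (le_of_le_of_eq (by decide +kernel) (count_prime_add_ninetyFive (n := 8667) (by norm_num)).symm)
      (by norm_num) (by norm_num) (by decide +kernel) (by assumption) (by assumption)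

theorem mul_log_two_lt_of_ge (r : ℕ) (hr : 1093 ≤ r) :
    (r : ℝ) - (Nat.primeCounting r : ℝ) >
      ((Nat.nth Nat.Prime r : ℝ) / Real.log (Nat.nth Nat.Prime r)) * Real.log 2 := by
  have hπ : (Nat.primeCounting r : ℝ) ≤ 48 / 210 * r - 12 := by
    have h := Nat.primeCounting'_add_le (a := 210) (k := 1000) (by norm_num) (by norm_num) (r - 999)
    have h1000 : Nat.primeCounting' 1000 = 168 :=
      (count_prime_add_ninetyFive (n := 905) (by norm_num)).trans (by decide +kernel)
    rw [show 1000 + (r - 999) = r + 1 by omega, h1000,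
      show Nat.totient 210 = 48 by decide +kernel] at h
    change Nat.primeCounting r ≤ _ at h
    have h' : 210 * Nat.primeCounting r + 2520 ≤ 48 * r := by omega
    have h'' : 210 * (Nat.primeCounting r : ℝ) + 2520 ≤ 48 * r := by exact_mod_cast h'
    linarith
  have hcount : Nat.primeCounting (Nat.nth Nat.Prime r) = r + 1 := by
    change Nat.count Nat.Prime (Nat.nth Nat.Prime r + 1) = r + 1
    rw [Nat.count_succ, if_pos (Nat.prime_nth_prime r)]
    exact congrArg (· + 1) (Nat.primeCounting'_nth_eq r)
  have hpr : r ≤ Nat.nth Nat.Prime r := by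
    have h := Nat.count_le (p := Nat.Prime) (n := Nat.nth Nat.Prime r)
    have h' : Nat.count Nat.Prime (Nat.nth Nat.Prime r) = r := Nat.primeCounting'_nth_eq r
    omega
  set p := Nat.nth Nat.Prime r
  have hψ := Chebyshev.psi_le_primeCounting_mul_log p
  rw [hcount] at hψ
  obtain ⟨m, hm⟩ : ∃ m, m = p / 30 := ⟨_, rfl⟩
  have hm1 : 1 ≤ m := by omega
  have hmp : 30 * m ≤ p := by omega
  have hpm : p ≤ 30 * m + 29 := by omega
  have hψm := psi_thirty_mul_ge m hm1
  have hmono : Chebyshev.psi ((30 * m : ℕ) : ℝ) ≤ Chebyshev.psi p :=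
    Chebyshev.psi_mono (by exact_mod_cast hmp)
  have hlogm : Real.log ((30 * m : ℕ) : ℝ) ≤ Real.log p :=
    Real.log_le_log (by exact_mod_cast (by omega : 0 < 30 * m)) (by exact_mod_cast hmp)
  have hpm' : (p : ℝ) ≤ 30 * m + 29 := by exact_mod_cast hpm
  have hp : (1093 : ℝ) ≤ p := by exact_mod_cast hr.trans hpr
  have hL : 1 ≤ Real.log p := by
    rw [Real.le_log_iff_exp_le (by linarith)]
    linarith [Real.exp_one_lt_d9]
  push_cast at hψ
  set L := Real.log p
  have hrL : 27.638 / 30 * (p - 29 : ℝ) - 3 - 4 * L ≤ r * L := by linarith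
  have h2 : (p : ℝ) * Real.log 2 ≤ p * 0.6932 :=
    mul_le_mul_of_nonneg_left (by linarith [Real.log_two_lt_d9]) (by linarith)
  have hprod : (162 / 210 * r + 12 : ℝ) * L ≤ ((r : ℝ) - Nat.primeCounting r) * L :=
    mul_le_mul_of_nonneg_right (by linarith) (by linarith)
  rw [gt_iff_lt, div_mul_eq_mul_div, div_lt_iff₀ (by linarith)]
  linarith

/-- For every integer r ≥ 55, r − π(r) > (p_{r+1} / log p_{r+1}) · log 2. -/
theorem stmt_7 (r : ℕ) (hr : 55 ≤ r) :
    (r : ℝ) - (Nat.primeCounting r : ℝ) >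
      ((Nat.nth Nat.Prime r : ℝ) / Real.log (Nat.nth Nat.Prime r)) * Real.log 2 := by
  rcases lt_or_ge r 1093 with h | h
  · exact mul_log_two_lt_of_lt r hr h
  · exact mul_log_two_lt_of_ge r h
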